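/- Let q² be a primitive N-th root of unity with N odd. Every irreducible finite-dimensional representation of the Chekhov-Fock algebra 𝒯_λ^q of an ideal triangulation of a genus g surface with p punctures has dimension N^{3g+p-3}. -/

import Mathlib

/-- A combinatorial model (oriented combinatorial map) of an ideal triangulation of a closed
orientable surface of genus `g` with `p` punctures, having `n` edges.  The darts `D` are the
corners (spikes) of the triangles; `φ` is the rotation moving counterclockwise to the next
corner of the same triangle (faces are triangles), `α` is the fixed-point-free involution
pairing the two sides of each edge, `edge` labels each dart by the edge of the triangulation
on its left, and `vert` records the puncture towards which the spike converges (orbits of the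
vertex rotation `φ ∘ α`).  Connectivity and the Euler relation `p - n + F = 2 - 2g` make this
the triangulation of the genus `g` surface with `p` punctures. -/
structure IdealTriangulation (g p n : ℕ) where
  D : Type
  [fintypeD : Fintype D]
  [decEqD : DecidableEq D]
  α : Equiv.Perm D
  φ : Equiv.Perm D
  α_invol : ∀ d, α (α d) = d
  α_fpf : ∀ d, α d ≠ d
  φ_triangles : ∀ d, φ (φ (φ d)) = d
  φ_fpf : ∀ d, φ d ≠ d
  edge : D → Fin n
  edge_surj : Function.Surjective edge
  edge_fiber : ∀ d d', edge d = edge d' ↔ (d' = d ∨ d' = α d)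
  vert : D → Fin p
  vert_surj : Function.Surjective vert
  vert_rot : ∀ d, vert (φ (α d)) = vert d
  vert_orbit : ∀ d d', vert d = vert d' → ∃ k : ℕ, ((α.trans φ) ^ k) d = d'
  connected : ∀ d d', ∃ w ∈ Subgroup.closure ({α, φ} : Set (Equiv.Perm D)), w d = d'
  card_darts : Fintype.card D = 2 * n
  euler : (p : ℤ) - (n : ℤ) + (Fintype.card D : ℤ) / 3 = 2 - 2 * (g : ℤ)

attribute [instance] IdealTriangulation.fintypeD IdealTriangulation.decEqD

/-- The number `a_ij` of spikes delimited on the left by edge `i` and on the right by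
edge `j`. -/
noncomputable def IdealTriangulation.spikeCount {g p n : ℕ} (T : IdealTriangulation g p n)
    (i j : Fin n) : ℕ :=
  (Finset.univ.filter (fun d => T.edge d = i ∧ T.edge (T.φ d) = j)).card

/-- The Weil–Petersson matrix `σ_ij = a_ij - a_ji` of an ideal triangulation. -/
noncomputable def IdealTriangulation.wpMatrix {g p n : ℕ} (T : IdealTriangulation g p n) :
    Matrix (Fin n) (Fin n) ℤ :=
  Matrix.of fun i j => (T.spikeCount i j : ℤ) - (T.spikeCount j i : ℤ)


/-- The bilinear Weil–Petersson form `σ(α, β) = Σ_{i,j} α_i σ_ij β_j` on `ℤⁿ`. -/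
noncomputable def IdealTriangulation.wpForm {g p n : ℕ} (T : IdealTriangulation g p n)
    (x y : Fin n → ℤ) : ℤ :=
  ∑ i : Fin n, ∑ j : Fin n, x i * T.wpMatrix i j * y j

/-- `k_{ij} ∈ {0,1,2}` is the number of ends of the edge `λ_j` converging to the `i`-th
puncture. -/
noncomputable def IdealTriangulation.endCount {g p n : ℕ} (T : IdealTriangulation g p n)
    (i : Fin p) (j : Fin n) : ℕ :=
  (Finset.univ.filter (fun d => T.vert d = i ∧ T.edge d = j)).card

/-- The family of `p` vectors generating the kernel of the Weil–Petersson form: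
the vectors `(k_{i1}, …, k_{in})` for `i = 1, …, p-1` together with `(1, 1, …, 1)`. -/
noncomputable def IdealTriangulation.kerGens {g p n : ℕ} (T : IdealTriangulation g p n)
    (i : Fin p) : Fin n → ℤ :=
  if i.val + 1 < p then (fun j => (T.endCount i j : ℤ)) else (fun _ => 1)

open FreeAlgebra in
/-- The defining relations of the quantum torus (Chekhov–Fock algebra): generators
`X_i` (`Sum.inl i`) and their inverses `X_i⁻¹` (`Sum.inr i`), subject to
`X_i X_j = q^(2 σ_ij) X_j X_i` and `X_i X_i⁻¹ = X_i⁻¹ X_i = 1`. -/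
inductive QTRel (n : ℕ) (q : ℂ) (σ : Fin n → Fin n → ℤ) :
    FreeAlgebra ℂ (Fin n ⊕ Fin n) → FreeAlgebra ℂ (Fin n ⊕ Fin n) → Prop
  | comm (i j : Fin n) : QTRel n q σ (ι ℂ (Sum.inl i) * ι ℂ (Sum.inl j))
      ((q ^ (2 * σ i j) : ℂ) • (ι ℂ (Sum.inl j) * ι ℂ (Sum.inl i)))
  | mul_inv (i : Fin n) : QTRel n q σ (ι ℂ (Sum.inl i) * ι ℂ (Sum.inr i)) 1
  | inv_mul (i : Fin n) : QTRel n q σ (ι ℂ (Sum.inr i) * ι ℂ (Sum.inl i)) 1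

/-- The quantum torus `𝒯` with parameters `q` and `σ`: the `ℂ`-algebra generated by
`X_1^{±1}, …, X_n^{±1}` with relations `X_i X_j = q^(2 σ_ij) X_j X_i`. -/
abbrev QuantumTorus (n : ℕ) (q : ℂ) (σ : Fin n → Fin n → ℤ) :=
  RingQuot (QTRel n q σ)

/-- The generator `X_i` of the quantum torus. -/
noncomputable def QuantumTorus.X {n : ℕ} {q : ℂ} {σ : Fin n → Fin n → ℤ} (i : Fin n) :
    QuantumTorus n q σ :=
  RingQuot.mkAlgHom ℂ (QTRel n q σ) (FreeAlgebra.ι ℂ (Sum.inl i))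

/-- The generator `X_i⁻¹` of the quantum torus. -/
noncomputable def QuantumTorus.Xinv {n : ℕ} {q : ℂ} {σ : Fin n → Fin n → ℤ} (i : Fin n) :
    QuantumTorus n q σ :=
  RingQuot.mkAlgHom ℂ (QTRel n q σ) (FreeAlgebra.ι ℂ (Sum.inr i))

/-- `X_i^k` for an integer exponent `k ∈ ℤ`. -/
noncomputable def QuantumTorus.Xzpow {n : ℕ} {q : ℂ} {σ : Fin n → Fin n → ℤ} (i : Fin n)
    (k : ℤ) : QuantumTorus n q σ :=
  if 0 ≤ k then (QuantumTorus.X i) ^ k.toNat else (QuantumTorus.Xinv i) ^ (-k).toNat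

/-- The monomial `X_1^{k_1} X_2^{k_2} ⋯ X_n^{k_n}` of the quantum torus. -/
noncomputable def QuantumTorus.monomial {n : ℕ} {q : ℂ} {σ : Fin n → Fin n → ℤ}
    (k : Fin n → ℤ) : QuantumTorus n q σ :=
  ((List.finRange n).map (fun i => QuantumTorus.Xzpow i (k i))).prod

/-- The Chekhov–Fock algebra `𝒯_λ^q` of an ideal triangulation `λ`: the quantum torus with
skew-commutation exponents given by the Weil–Petersson matrix `σ` of `λ`. -/
noncomputable abbrev ChekhovFock {g p n : ℕ} (T : IdealTriangulation g p n) (q : ℂ) :=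
  QuantumTorus n q (fun i j => T.wpMatrix i j)

/-- A representation `ρ : A → End(V)` is irreducible if `V ≠ 0` and the only invariant
subspaces are `0` and `V`. -/
def IsIrreducibleRep {A V : Type*} [Ring A] [Algebra ℂ A] [AddCommGroup V] [Module ℂ V]
    (ρ : A →ₐ[ℂ] Module.End ℂ V) : Prop :=
  (∃ v : V, v ≠ 0) ∧
    ∀ W : Submodule ℂ V, (∀ (a : A), ∀ w ∈ W, ρ a w ∈ W) → W = ⊥ ∨ W = ⊤

/-!
Since `ρ` is irreducible, it is surjective onto `End V`, so `End V` is a central algebra generated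
by units `U i = ρ (X i)` that commute up to scalars. Such an algebra is the direct sum of the joint
eigenspaces ("weight spaces") of the conjugations by the `U i`, each of which is a line because the
elements of weight zero are central. As the weights that occur form the subgroup generated by the
weights of the `U i`, that is, the row space of `σ` modulo `N`, this gives
`(dim V) ^ 2 = |range (σ mod N)|`.

To compute the kernel of `σ mod N`, attach to a labelling `x` of the edges and a corner of a
triangle the sum of the labels of the two sides at that corner minus the label of the third. The
value of `x σ` at an edge is the difference of these numbers at two corners which follow each other
around a puncture, so `x σ = 0` exactly when they depend only on the puncture. When `2` is
invertible they moreover determine `x`, so the kernel is free of rank `p`. Hence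
`N ^ p * (dim V) ^ 2 = N ^ n`.
-/

section IrreducibleModule

variable (K : Type*) {A V : Type*} [Field K] [IsAlgClosed K] [Ring A] [Algebra K A]
  [AddCommGroup V] [Module K V] [FiniteDimensional K V]

theorem surjective_lsmul_of_isSimpleModule [Module A V] [IsScalarTower K A V] [IsSimpleModule A V] :
    Function.Surjective (Algebra.lsmul K K V : A →ₐ[K] Module.End K V) := by
  intro f
  have commutes_with_f (g : Module.End A V) (v : V) : f (g v) = g (f v) := by
    obtain ⟨c, rfl⟩ := (IsSimpleModule.algebraMap_end_bijective_of_isAlgClosed K).2 g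
    simp only [Module.algebraMap_end_apply, map_smul]
  let f' : Module.End (Module.End A V) V := { f with map_smul' := commutes_with_f }
  obtain ⟨s, hs⟩ := Module.Finite.fg_top (R := K) (M := V)
  obtain ⟨a, ha⟩ := jacobson_density (R := A) f' s
  exact ⟨a, LinearMap.ext_on hs fun v hv => (ha v hv).symm⟩

end IrreducibleModule

theorem IsIrreducibleRep.surjective {A V : Type*} [Ring A] [Algebra ℂ A] [AddCommGroup V]
    [Module ℂ V] [FiniteDimensional ℂ V] {ρ : A →ₐ[ℂ] Module.End ℂ V} (hρ : IsIrreducibleRep ρ) :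
    Function.Surjective ρ := by
  obtain ⟨⟨v, hv⟩, eq_bot_or_eq_top⟩ := hρ
  have : Nontrivial V := ⟨v, 0, hv⟩
  let : Module A V := Module.compHom V ρ.toRingHom
  have : IsScalarTower ℂ A V := ⟨fun c a v => congr($(map_smul ρ c a) v)⟩
  have : IsSimpleModule A V := (isSimpleModule_iff ..).2
    { eq_bot_or_eq_top := fun W => by
        simpa only [Submodule.restrictScalars_eq_bot_iff, Submodule.restrictScalars_eq_top_iff]
          using eq_bot_or_eq_top (W.restrictScalars ℂ) fun a w hw => W.smul_mem a hw }
  intro f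
  obtain ⟨a, rfl⟩ := surjective_lsmul_of_isSimpleModule ℂ (A := A) f
  exact ⟨a, rfl⟩

section WeightSpace

variable {ι Λ K A : Type*} [AddCommGroup Λ] [Field K] [Ring A] [Algebra K A]

/-- The elements of weight `c` with respect to a family of units `U`: the joint eigenspace of the
conjugations `a ↦ (U i)⁻¹ * a * U i` for the eigenvalues `e (c i)`. Weights are written additively;
the character `e` turns them into scalars. -/
def weightSpace (e : AddChar Λ K) (U : ι → Aˣ) (c : ι → Λ) : Submodule K A :=
  ⨅ i, Module.End.eigenspace (LinearMap.mulLeftRight K ((↑(U i)⁻¹ : A), (U i : A))) (e (c i))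

variable {e : AddChar Λ K} {U : ι → Aˣ} {x : ι → Λ} {c : ι → ι → Λ}

theorem mem_weightSpace {a : A} :
    a ∈ weightSpace e U x ↔ ∀ i, a * U i = e (x i) • (U i * a) := by
  simp only [weightSpace, Submodule.mem_iInf, Module.End.mem_eigenspace_iff,
    LinearMap.mulLeftRight_apply, mul_assoc, Units.inv_mul_eq_iff_eq_mul, mul_smul_comm]

instance weightSpace.gradedMonoid : SetLike.GradedMonoid (weightSpace e U) where
  one_mem := mem_weightSpace.2 fun i => by simp
  mul_mem x y a b ha hb := mem_weightSpace.2 fun i => by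
    rw [mul_assoc, mem_weightSpace.1 hb, mul_smul_comm, ← mul_assoc, mem_weightSpace.1 ha,
      smul_mul_assoc, smul_smul, mul_assoc, Pi.add_apply, AddChar.map_add_eq_mul, mul_comm (e _)]

theorem inv_mem_weightSpace {u : Aˣ} (hu : (u : A) ∈ weightSpace e U x) :
    (↑u⁻¹ : A) ∈ weightSpace e U (-x) := by
  refine mem_weightSpace.2 fun i => ?_
  have he : e (-x i) * e (x i) = 1 := by
    rw [← AddChar.map_add_eq_mul, neg_add_cancel, AddChar.map_zero_eq_one]
  rw [Units.inv_mul_eq_iff_eq_mul, Pi.neg_apply, mul_smul_comm, ← mul_assoc,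
    mem_weightSpace.1 hu, smul_mul_assoc, smul_smul, he, one_smul, Units.mul_inv_cancel_right]

theorem exists_units_mem_weightSpace (hU : ∀ i, (U i : A) ∈ weightSpace e U (c i))
    (hx : x ∈ AddSubgroup.closure (Set.range c)) : ∃ u : Aˣ, (u : A) ∈ weightSpace e U x := by
  induction hx using AddSubgroup.closure_induction with
  | mem _ h => obtain ⟨i, rfl⟩ := h; exact ⟨U i, hU i⟩
  | zero => exact ⟨1, SetLike.one_mem_graded _⟩
  | add _ _ _ _ hx hy =>
    obtain ⟨⟨u, hu⟩, ⟨v, hv⟩⟩ := hx, hy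
    exact ⟨u * v, SetLike.mul_mem_graded hu hv⟩
  | neg _ _ hx => obtain ⟨u, hu⟩ := hx; exact ⟨u⁻¹, inv_mem_weightSpace hu⟩

-- The `U i` commute up to scalars, so the conjugations by them commute with each other.
theorem iSupIndep_weightSpace (he : Function.Injective e)
    (hU : ∀ i, (U i : A) ∈ weightSpace e U (c i)) : iSupIndep (weightSpace e U) := by
  let conj (i : ι) : Module.End K A :=
    LinearMap.mulLeftRight K ((↑(U i)⁻¹ : A), (U i : A))
  have inv_mul_inv (i j : ι) :
      (↑(U j)⁻¹ * ↑(U i)⁻¹ : A) = e (c j i) • (↑(U i)⁻¹ * ↑(U j)⁻¹) := by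
    rw [Units.inv_mul_eq_iff_eq_mul, mul_smul_comm, ← mul_assoc, ← smul_mul_assoc,
      Units.eq_mul_inv_iff_mul_eq, Units.inv_mul_eq_iff_eq_mul, mul_smul_comm, ← mul_assoc,
      ← smul_mul_assoc, Units.eq_mul_inv_iff_mul_eq, mem_weightSpace.1 (hU j) i]
  have conj_commute (i j : ι) : Commute (conj i) (conj j) := LinearMap.ext fun a =>
    calc ↑(U i)⁻¹ * (↑(U j)⁻¹ * a * U j) * U i
        = ↑(U i)⁻¹ * ↑(U j)⁻¹ * a * (U j * U i) := by simp only [mul_assoc]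
      _ = ↑(U j)⁻¹ * ↑(U i)⁻¹ * a * (U i * U j) := by
        rw [mem_weightSpace.1 (hU j) i, inv_mul_inv i j, mul_smul_comm, smul_mul_assoc,
          smul_mul_assoc]
      _ = ↑(U j)⁻¹ * (↑(U i)⁻¹ * a * U i) * U j := by simp only [mul_assoc]
  have indep := Module.End.independent_iInf_maxGenEigenspace_of_forall_mapsTo conj fun i j μ =>
    Module.End.mapsTo_maxGenEigenspace_of_comm (conj_commute j i) μ
  refine (indep.comp (f := fun x : ι → Λ => e ∘ x) he.comp_left).mono fun x => ?_
  exact iInf_mono fun i => (conj i).genEigenspace_le_maximal _ _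

theorem weightSpace_zero_le_center
    (hgen : Algebra.adjoin K (⋃ i, {(U i : A), (↑(U i)⁻¹ : A)}) = ⊤) {a : A}
    (ha : a ∈ weightSpace e U 0) : a ∈ Subalgebra.center K A := by
  have commute_U (i : ι) : Commute a (U i) := by
    rw [commute_iff_eq, mem_weightSpace.1 ha, Pi.zero_apply, AddChar.map_zero_eq_one, one_smul]
  have adjoin_le : Algebra.adjoin K (⋃ i, {(U i : A), (↑(U i)⁻¹ : A)}) ≤
      Subalgebra.centralizer K {a} :=
    Algebra.adjoin_le <| Set.iUnion_subset fun i => Set.pair_subset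
      ((Subalgebra.mem_centralizer_iff K).2 <| by rintro _ rfl; exact commute_U i)
      ((Subalgebra.mem_centralizer_iff K).2 <| by rintro _ rfl; exact (commute_U i).units_inv_right)
  rw [Subalgebra.mem_center_iff]
  intro b
  have hb := adjoin_le (hgen ▸ Algebra.mem_top : b ∈ _)
  exact ((Subalgebra.mem_centralizer_iff K).1 hb a rfl).symm

theorem mem_span_singleton_of_mem_weightSpace [Algebra.IsCentral K A]
    (hgen : Algebra.adjoin K (⋃ i, {(U i : A), (↑(U i)⁻¹ : A)}) = ⊤) {u : Aˣ} {a : A}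
    (hu : (u : A) ∈ weightSpace e U x) (ha : a ∈ weightSpace e U x) : a ∈ K ∙ (u : A) := by
  have weight_zero : ↑u⁻¹ * a ∈ weightSpace e U 0 :=
    neg_add_cancel x ▸ SetLike.mul_mem_graded (inv_mem_weightSpace hu) ha
  obtain ⟨k, hk⟩ := (Algebra.IsCentral.mem_center_iff K).1
    (weightSpace_zero_le_center hgen weight_zero)
  refine Submodule.mem_span_singleton.2 ⟨k, ?_⟩
  rw [Algebra.smul_def, Algebra.commutes, ← hk, Units.mul_inv_cancel_left]

theorem span_range_units_eq_top [Algebra.IsCentral K A]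
    (hgen : Algebra.adjoin K (⋃ i, {(U i : A), (↑(U i)⁻¹ : A)}) = ⊤)
    (hU : ∀ i, (U i : A) ∈ weightSpace e U (c i)) {u : AddSubgroup.closure (Set.range c) → Aˣ}
    (hu : ∀ y : AddSubgroup.closure (Set.range c), (u y : A) ∈ weightSpace e U y) :
    Submodule.span K (Set.range fun y => (u y : A)) = ⊤ := by
  set S := Submodule.span K (Set.range fun y => (u y : A))
  have mem_S (x : AddSubgroup.closure (Set.range c)) {a : A} (ha : a ∈ weightSpace e U x) :
      a ∈ S :=
    Submodule.span_mono (Set.singleton_subset_iff.2 (Set.mem_range_self x))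
      (mem_span_singleton_of_mem_weightSpace hgen (hu x) ha)
  have S_mul_S_le : S * S ≤ S := by
    rw [Submodule.span_mul_span, Submodule.span_le]
    rintro _ ⟨_, ⟨x, rfl⟩, _, ⟨y, rfl⟩, rfl⟩
    exact mem_S (x + y) (SetLike.mul_mem_graded (hu x) (hu y))
  let B : Subalgebra K A := S.toSubalgebra (mem_S 0 (SetLike.one_mem_graded _))
    fun _ _ ha hb => S_mul_S_le (Submodule.mul_mem_mul ha hb)
  have adjoin_le : Algebra.adjoin K (⋃ i, {(U i : A), (↑(U i)⁻¹ : A)}) ≤ B := by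
    refine Algebra.adjoin_le <| Set.iUnion_subset fun i => ?_
    let x : AddSubgroup.closure (Set.range c) :=
      ⟨c i, AddSubgroup.subset_closure (Set.mem_range_self i)⟩
    exact Set.pair_subset (mem_S x (hU i)) (mem_S (-x) (inv_mem_weightSpace (hU i)))
  exact eq_top_iff.2 fun a _ => adjoin_le (hgen ▸ Algebra.mem_top)

theorem finrank_eq_card_closure_range_weights [Nontrivial A] [Algebra.IsCentral K A]
    (he : Function.Injective e)
    (hgen : Algebra.adjoin K (⋃ i, {(U i : A), (↑(U i)⁻¹ : A)}) = ⊤)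
    (hU : ∀ i, (U i : A) ∈ weightSpace e U (c i)) :
    Module.finrank K A = Nat.card (AddSubgroup.closure (Set.range c)) := by
  choose u hu using fun x : AddSubgroup.closure (Set.range c) =>
    exists_units_mem_weightSpace hU x.2
  have linearIndependent_u : LinearIndependent K fun x => (u x : A) :=
    ((iSupIndep_weightSpace he hU).comp Subtype.val_injective).linearIndependent _ hu
      fun x => (u x).ne_zero
  exact Module.finrank_eq_nat_card_basis
    (.mk linearIndependent_u (span_range_units_eq_top hgen hU hu).ge)

end WeightSpace

theorem addSubgroupClosure_eq_span_zmod (N : ℕ) {M : Type*} [AddCommGroup M] [Module (ZMod N) M]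
    (s : Set M) : AddSubgroup.closure s = (Submodule.span (ZMod N) s).toAddSubgroup :=
  le_antisymm ((AddSubgroup.closure_le _).2 Submodule.subset_span) <|
    (Submodule.span_le.2 AddSubgroup.subset_closure :
      Submodule.span (ZMod N) s ≤ AddSubgroup.toZModSubmodule N (AddSubgroup.closure s))

theorem card_ker_mul_card_range {R M M' : Type*} [Ring R] [AddCommGroup M] [AddCommGroup M']
    [Module R M] [Module R M'] (f : M →ₗ[R] M') :
    Nat.card (LinearMap.ker f) * Nat.card (LinearMap.range f) = Nat.card M :=
  (AddSubgroup.index_ker f.toAddMonoidHom ▸ f.toAddMonoidHom.ker.card_mul_index :)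

theorem zmodChar_injective {N : ℕ} [NeZero N] {M : Type*} [CommMonoid M] {ζ : M}
    (hζ : IsPrimitiveRoot ζ N) : Function.Injective (AddChar.zmodChar N hζ.pow_eq_one) :=
  fun x y hxy => ZMod.val_injective N (hζ.pow_inj x.val_lt y.val_lt hxy)

theorem zmodChar_intCast {N : ℕ} [NeZero N] {M : Type*} [DivisionCommMonoid M] {ζ : M}
    (hζ : ζ ^ N = 1) (k : ℤ) :
    AddChar.zmodChar N hζ k = ζ ^ k := by
  have map_one : AddChar.zmodChar N hζ 1 = ζ := by
    simpa only [Nat.cast_one, pow_one] using AddChar.zmodChar_apply' hζ 1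
  rw [← zsmul_one, AddChar.map_zsmul_eq_zpow, map_one]

namespace QuantumTorus

variable {n : ℕ} {q : ℂ} {σ : Fin n → Fin n → ℤ}

/-- The generator `X_i` of the quantum torus as a unit, with inverse `Xinv i`. -/
noncomputable def unitX (i : Fin n) : (QuantumTorus n q σ)ˣ where
  val := X i
  inv := Xinv i
  val_inv := by
    have h := RingQuot.mkAlgHom_rel ℂ (QTRel.mul_inv (q := q) (σ := σ) i)
    rwa [map_mul, map_one] at h
  inv_val := by
    have h := RingQuot.mkAlgHom_rel ℂ (QTRel.inv_mul (q := q) (σ := σ) i)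
    rwa [map_mul, map_one] at h

theorem X_mul_X (i j : Fin n) :
    (X i * X j : QuantumTorus n q σ) = q ^ (2 * σ i j) • (X j * X i) := by
  have h := RingQuot.mkAlgHom_rel ℂ (QTRel.comm (q := q) (σ := σ) i j)
  rwa [map_smul, map_mul, map_mul] at h

theorem adjoin_X_Xinv_eq_top :
    Algebra.adjoin ℂ (⋃ i, {X i, Xinv i} : Set (QuantumTorus n q σ)) = ⊤ := by
  have image_range_ι_subset : RingQuot.mkAlgHom ℂ (QTRel n q σ) '' Set.range (FreeAlgebra.ι ℂ) ⊆
      ⋃ i, {X i, Xinv i} := by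
    rintro _ ⟨_, ⟨i | i, rfl⟩, rfl⟩
    · exact Set.mem_iUnion_of_mem i (Or.inl rfl)
    · exact Set.mem_iUnion_of_mem i (Or.inr rfl)
  rw [eq_top_iff, ← (AlgHom.range_eq_top _).2 (RingQuot.mkAlgHom_surjective ℂ (QTRel n q σ)),
    ← Algebra.map_top, ← FreeAlgebra.adjoin_range_ι, AlgHom.map_adjoin]
  exact Algebra.adjoin_mono image_range_ι_subset

theorem finrank_eq_card_range {N : ℕ} [NeZero N] (hq : IsPrimitiveRoot (q ^ 2) N) {A : Type*}
    [Ring A] [Nontrivial A] [Algebra ℂ A] [Algebra.IsCentral ℂ A] {f : QuantumTorus n q σ →ₐ[ℂ] A}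
    (hf : Function.Surjective f) :
    Module.finrank ℂ A =
      Nat.card (LinearMap.range ((Matrix.of σ).map (Int.cast : ℤ → ZMod N)).vecMulLinear) := by
  let M : Matrix (Fin n) (Fin n) (ZMod N) := (Matrix.of σ).map Int.cast
  let U (i : Fin n) : Aˣ := Units.map (f : QuantumTorus n q σ →* A) (unitX i)
  have adjoin_U : Algebra.adjoin ℂ (⋃ i, {(U i : A), (↑(U i)⁻¹ : A)}) = ⊤ := by
    rw [← (AlgHom.range_eq_top f).2 hf, ← Algebra.map_top, ← adjoin_X_Xinv_eq_top,
      AlgHom.map_adjoin, Set.image_iUnion]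
    simp only [Set.image_pair]
    rfl
  have U_mem (j : Fin n) :
      (U j : A) ∈ weightSpace (AddChar.zmodChar N hq.pow_eq_one) U (M.row j) := by
    refine mem_weightSpace.2 fun i => ?_
    have h := congr(f $(X_mul_X (q := q) (σ := σ) j i))
    rw [map_smul, map_mul, map_mul, zpow_mul, zpow_ofNat] at h
    exact (zmodChar_intCast hq.pow_eq_one (σ j i)).symm ▸ h
  rw [finrank_eq_card_closure_range_weights (zmodChar_injective hq) adjoin_U U_mem,
    addSubgroupClosure_eq_span_zmod N, range_vecMulLinear]
  rfl

end QuantumTorus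

theorem sum_card_filter_mul {ι κ R : Type*} [Fintype κ] [DecidableEq κ] [NonAssocSemiring R]
    (s : Finset ι) (g : ι → κ) (x : κ → R) :
    ∑ j, (({d ∈ s | g d = j}.card : ℕ) : R) * x j = ∑ d ∈ s, x (g d) := by
  simp only [← nsmul_eq_mul, ← Finset.sum_const, Finset.sum_fiberwise']

namespace IdealTriangulation

open Matrix

variable {g p n : ℕ} (T : IdealTriangulation g p n)

theorem edge_α (d : T.D) : T.edge (T.α d) = T.edge d :=
  ((T.edge_fiber d (T.α d)).2 (Or.inr rfl)).symm

theorem vert_α (d : T.D) : T.vert (T.α d) = T.vert (T.φ d) := by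
  rw [← T.vert_rot (T.α d), T.α_invol]

theorem sum_filter_edge_eq {M : Type*} [AddCommMonoid M] (f : T.D → M) (d : T.D) :
    ∑ d' with T.edge d' = T.edge d, f d' = f d + f (T.α d) := by
  have fiber_eq : ({d' | T.edge d' = T.edge d} : Finset T.D) = {d, T.α d} := by
    ext d'
    rw [Finset.mem_filter_univ, eq_comm, T.edge_fiber, Finset.mem_insert, Finset.mem_singleton]
  rw [fiber_eq, Finset.sum_pair (T.α_fpf d).symm]

theorem exists_eq_comp_vert {X : Type*} [Nonempty X] {f : T.D → X}
    (hf : ∀ d, f (T.φ (T.α d)) = f d) : ∃ w : Fin p → X, f = w ∘ T.vert := by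
  refine (Function.factorsThrough_iff f).1 fun d d' hdd' => ?_
  obtain ⟨k, rfl⟩ := T.vert_orbit d d' hdd'
  clear hdd'
  induction k with
  | zero => rfl
  | succ k ih => rw [pow_succ', Equiv.Perm.mul_apply, ih]; exact (hf _).symm

/-- The matrix of the numbers `k_ij` of ends of the edge `j` at the puncture `i`, over `R`;
its rows span the kernel of the Weil–Petersson matrix if `2` is invertible in `R`. -/
noncomputable def endMatrix (R : Type*) [NatCast R] : Matrix (Fin p) (Fin n) R :=
  Matrix.of fun i j => (T.endCount i j : R)

section CornerExcess

variable {R : Type*} [CommRing R]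

/-- The sum of the values of `x` at the two sides of a triangle meeting at the corner `d`, minus
its value at the side opposite to `d`. The dart `d` also stands for the side of the triangle from
the corner `d` to the corner `φ d`, so that the sides at `d` are those of `d` and `φ (φ d)`. -/
def cornerExcess (x : Fin n → R) (d : T.D) : R :=
  x (T.edge d) + x (T.edge (T.φ (T.φ d))) - x (T.edge (T.φ d))

theorem cornerExcess_add_cornerExcess_φ (x : Fin n → R) (d : T.D) :
    T.cornerExcess x d + T.cornerExcess x (T.φ d) = 2 * x (T.edge d) := by
  simp only [cornerExcess, T.φ_triangles]
  ring

theorem vecMul_endMatrix_edge (w : Fin p → R) (d : T.D) :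
    (w ᵥ* T.endMatrix R) (T.edge d) = w (T.vert d) + w (T.vert (T.φ d)) := by
  rw [← vert_α, ← T.sum_filter_edge_eq (fun d => w (T.vert d)), ← sum_card_filter_mul]
  simp only [vecMul, dotProduct, endMatrix, endCount, Matrix.of_apply, Finset.filter_filter,
    mul_comm, and_comm]

theorem cornerExcess_vecMul_endMatrix (w : Fin p → R) (d : T.D) :
    T.cornerExcess (w ᵥ* T.endMatrix R) d = 2 * w (T.vert d) := by
  simp only [cornerExcess, vecMul_endMatrix_edge, T.φ_triangles]
  ring

theorem vecMul_wpMatrix (x : Fin n → R) (i : Fin n) :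
    (x ᵥ* T.wpMatrix.map Int.cast) i =
      ∑ d with T.edge d = i, (x (T.edge (T.φ (T.φ d))) - x (T.edge (T.φ d))) := by
  have sum_left : ∑ j, (T.spikeCount j i : R) * x j =
      ∑ d with T.edge d = i, x (T.edge (T.φ (T.φ d))) := by
    rw [Finset.sum_filter, ← Equiv.sum_comp T.φ, ← Finset.sum_filter]
    simp only [T.φ_triangles, spikeCount, ← sum_card_filter_mul, Finset.filter_filter, and_comm]
  have sum_right : ∑ j, (T.spikeCount i j : R) * x j =
      ∑ d with T.edge d = i, x (T.edge (T.φ d)) := by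
    simp only [spikeCount, ← sum_card_filter_mul, Finset.filter_filter]
  rw [Finset.sum_sub_distrib, ← sum_left, ← sum_right, ← Finset.sum_sub_distrib, vecMul, dotProduct]
  refine Finset.sum_congr rfl fun j _ => ?_
  rw [Matrix.map_apply, wpMatrix, Matrix.of_apply]
  push_cast
  ring

theorem vecMul_wpMatrix_edge (x : Fin n → R) (d : T.D) :
    (x ᵥ* T.wpMatrix.map Int.cast) (T.edge d) =
      T.cornerExcess x d - T.cornerExcess x (T.φ (T.α d)) := by
  rw [vecMul_wpMatrix, sum_filter_edge_eq]
  simp only [cornerExcess, T.φ_triangles, edge_α]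
  ring

theorem ker_vecMulLinear_wpMatrix (h2 : IsUnit (2 : R)) :
    LinearMap.ker (T.wpMatrix.map (Int.cast : ℤ → R)).vecMulLinear =
      LinearMap.range (T.endMatrix R).vecMulLinear := by
  ext x
  rw [LinearMap.mem_ker, LinearMap.mem_range, funext_iff, T.edge_surj.forall]
  simp only [vecMulLinear_apply, vecMul_wpMatrix_edge, Pi.zero_apply, sub_eq_zero]
  constructor
  · intro hx
    obtain ⟨w, hw⟩ := T.exists_eq_comp_vert fun d => (hx d).symm
    have vecMul_eq : w ᵥ* T.endMatrix R = h2.unit • x := by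
      refine funext <| T.edge_surj.forall.2 fun d => ?_
      have h := T.cornerExcess_add_cornerExcess_φ x d
      rwa [funext_iff.1 hw d, funext_iff.1 hw (T.φ d), Function.comp_apply, Function.comp_apply,
        ← vecMul_endMatrix_edge] at h
    exact ⟨h2.unit⁻¹ • w, by rw [smul_vecMul, vecMul_eq, inv_smul_smul]⟩
  · rintro ⟨w, rfl⟩ d
    rw [cornerExcess_vecMul_endMatrix, cornerExcess_vecMul_endMatrix, T.vert_rot]

theorem vecMulLinear_endMatrix_injective (h2 : IsLeftRegular (2 : R)) :
    Function.Injective (T.endMatrix R).vecMulLinear := by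
  intro w w' h
  refine funext <| T.vert_surj.forall.2 fun d => h2 ?_
  simp only [← cornerExcess_vecMul_endMatrix]
  exact congr(T.cornerExcess $h d)

theorem card_ker_vecMulLinear_wpMatrix (h2 : IsUnit (2 : R)) :
    Nat.card (LinearMap.ker (T.wpMatrix.map (Int.cast : ℤ → R)).vecMulLinear) =
      Nat.card R ^ p := by
  rw [T.ker_vecMulLinear_wpMatrix h2, ← Nat.card_congr
    (LinearEquiv.ofInjective _ (T.vecMulLinear_endMatrix_injective h2.isRegular.left)).toEquiv,
    Nat.card_fun, Nat.card_fin]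

end CornerExcess

end IdealTriangulation

/-- Let `q²` be a primitive `N`-th root of unity with `N` odd.  Every
irreducible finite-dimensional representation of the Chekhov–Fock algebra `𝒯_λ^q` of an ideal
triangulation of a genus `g` surface with `p` punctures has dimension `N^(3g+p-3)`. -/
theorem chekhovFock_irreducible_rep_dim_odd (g p n N : ℕ) (hp : 1 ≤ p)
    (hgp : g = 0 → 3 ≤ p) (hn : (n : ℤ) = 6 * g + 3 * p - 6)
    (T : IdealTriangulation g p n) (q : ℂ)
    (hN : Odd N) (hq : IsPrimitiveRoot (q ^ 2) N)
    (V : Type*) [AddCommGroup V] [Module ℂ V] [FiniteDimensional ℂ V]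
    (ρ : ChekhovFock T q →ₐ[ℂ] Module.End ℂ V) (hρ : IsIrreducibleRep ρ) :
    Module.finrank ℂ V = N ^ (3 * g + p - 3) := by
  have : NeZero N := ⟨hN.pos.ne'⟩
  have : Nontrivial V := (nontrivial_iff_exists_ne 0).2 hρ.1
  have isUnit_two : IsUnit (2 : ZMod N) :=
    (ZMod.isUnit_iff_coprime 2 N).2 (Nat.coprime_two_left.2 hN)
  let L := (T.wpMatrix.map (Int.cast : ℤ → ZMod N)).vecMulLinear
  have card_range : Module.finrank ℂ V ^ 2 = Nat.card (LinearMap.range L) := by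
    rw [sq, ← Module.finrank_linearMap]
    exact QuantumTorus.finrank_eq_card_range hq hρ.surjective
  have card_ker : Nat.card (LinearMap.ker L) = N ^ p := by
    rw [T.card_ker_vecMulLinear_wpMatrix isUnit_two, Nat.card_zmod]
  have card_mul_card : N ^ p * Module.finrank ℂ V ^ 2 = N ^ p * (N ^ (3 * g + p - 3)) ^ 2 :=
    calc N ^ p * Module.finrank ℂ V ^ 2 = Nat.card (Fin n → ZMod N) := by
          rw [← card_ker, card_range, card_ker_mul_card_range]
      _ = N ^ (p + (3 * g + p - 3) * 2) := by
          rw [Nat.card_fun, Nat.card_zmod, Nat.card_fin]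
          congr 1
          omega
      _ = N ^ p * (N ^ (3 * g + p - 3)) ^ 2 := by rw [pow_add, pow_mul]
  exact Nat.pow_left_injective two_ne_zero
    (Nat.eq_of_mul_eq_mul_left (pow_pos hN.pos p) card_mul_card)
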